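/- Let N ≥ 1, M ≥ 2, Δt, Δx, Δy, Δz > 0, μ ∈ ℝ, J ∈ ℝ, V : ℝ → ℝ, and let u^k_{m,n,p} ∈ ℝ (k ∈ {0,…,M}, m,n,p ∈ {0,…,N+1}) satisfy, for all k ∈ {1,…,M−1} and m,n,p ∈ {1,…,N}, the conservative scheme (β = γ = 0) in multiplied form: [δ²ₜu^k_{m,n,p}/(Δt)² − (δ²ₓ/(Δx)² + δ²ᵧ/(Δy)² + δ²_z/(Δz)²)u^k_{m,n,p} + (μ/2)(u^{k+1}_{m,n,p} + u^{k−1}_{m,n,p})]·δₜu^k_{m,n,p} + V(u^{k+1}_{m,n,p}) − V(u^{k−1}_{m,n,p}) − J·δₜu^k_{m,n,p} = 0, together with the discrete Neumann conditions u^k_{N+1,n,p} = u^k_{N,n,p}, u^k_{m,N+1,p} = u^k_{m,N,p}, u^k_{m,n,N+1} = u^k_{m,n,N}, and with time-independent Dirichlet boundary data: u^{k+1}_{0,i,j} = u^{k−1}_{0,i,j}, u^{k+1}_{i,0,j} = u^{k−1}_{i,0,j}, u^{k+1}_{i,j,0} = u^{k−1}_{i,j,0} for all i,j ∈ {1,…,N}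 and all k ∈ {1,…,M−1}. Then the discrete total energy is conserved: E^k = E^{k−1} for every k ∈ {1,…,M−1}. -/

import Mathlib

/-!
Whatever `u` is, multiplying the scheme by `δₜu` and summing over the box gives an energy balance:
the kinetic, mass, potential and source terms of the multiplied scheme are exact time differences,
and by summation by parts so is the term `-(∇²u)(δₜu)`, up to boundary terms.
Along the x-axis these are multiples of `(δₓu_N)(δₜu_{N+1}) - (δₓu_0)(δₜu_1)`, and the layer at
index `0` in the energy turns the factor `δₜu_1` into `δₜu_0`. The Neumann condition gives
`δₓu_N = 0`, and time-independent Dirichlet data give `δₜu_0 = 0`.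
-/

noncomputable section

open Finset

/-- δₜu^k = u^{k+1} − u^{k−1}. -/
def dT (u : ℕ → ℤ → ℤ → ℤ → ℝ) (k : ℕ) (m n p : ℤ) : ℝ :=
  u (k + 1) m n p - u (k - 1) m n p

/-- δ²ₜu^k = u^{k+1} − 2u^k + u^{k−1}. -/
def d2T (u : ℕ → ℤ → ℤ → ℤ → ℝ) (k : ℕ) (m n p : ℤ) : ℝ :=
  u (k + 1) m n p - 2 * u k m n p + u (k - 1) m n p

/-- Forward spatial differences. -/
def dX (u : ℕ → ℤ → ℤ → ℤ → ℝ) (k : ℕ) (m n p : ℤ) : ℝ := u k (m + 1) n p - u k m n p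
def dY (u : ℕ → ℤ → ℤ → ℤ → ℝ) (k : ℕ) (m n p : ℤ) : ℝ := u k m (n + 1) p - u k m n p
def dZ (u : ℕ → ℤ → ℤ → ℤ → ℝ) (k : ℕ) (m n p : ℤ) : ℝ := u k m n (p + 1) - u k m n p

/-- Centered second spatial differences. -/
def d2X (u : ℕ → ℤ → ℤ → ℤ → ℝ) (k : ℕ) (m n p : ℤ) : ℝ :=
  u k (m + 1) n p - 2 * u k m n p + u k (m - 1) n p
def d2Y (u : ℕ → ℤ → ℤ → ℤ → ℝ) (k : ℕ) (m n p : ℤ) : ℝ :=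
  u k m (n + 1) p - 2 * u k m n p + u k m (n - 1) p
def d2Z (u : ℕ → ℤ → ℤ → ℤ → ℝ) (k : ℕ) (m n p : ℤ) : ℝ :=
  u k m n (p + 1) - 2 * u k m n p + u k m n (p - 1)

/-- The discrete node Hamiltonian `H^k_{m,n,p}`. -/
def nodeHd (Δt Δx Δy Δz μ J : ℝ) (V : ℝ → ℝ) (u : ℕ → ℤ → ℤ → ℤ → ℝ)
    (k : ℕ) (m n p : ℤ) : ℝ :=
  (1:ℝ)/2 * ((u (k + 1) m n p - u k m n p) / Δt) ^ 2
    + (1:ℝ)/2 * (dX u (k + 1) m n p * dX u k m n p / Δx ^ 2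
        + dY u (k + 1) m n p * dY u k m n p / Δy ^ 2
        + dZ u (k + 1) m n p * dZ u k m n p / Δz ^ 2)
    + μ / 2 * (((u (k + 1) m n p) ^ 2 + (u k m n p) ^ 2) / 2)
    + (V (u (k + 1) m n p) + V (u k m n p)) / 2
    - J * (u (k + 1) m n p + u k m n p) / 2

/-- The total discrete energy `E^k`. -/
def totEd (N : ℕ) (Δt Δx Δy Δz μ J : ℝ) (V : ℝ → ℝ) (u : ℕ → ℤ → ℤ → ℤ → ℝ)
    (k : ℕ) : ℝ :=
  (∑ m ∈ Icc (1:ℤ) (N:ℤ), ∑ n ∈ Icc (1:ℤ) (N:ℤ), ∑ p ∈ Icc (1:ℤ) (N:ℤ),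
      nodeHd Δt Δx Δy Δz μ J V u k m n p) * (Δx * Δy * Δz)
    + (1:ℝ)/2 * (∑ i ∈ Icc (1:ℤ) (N:ℤ), ∑ j ∈ Icc (1:ℤ) (N:ℤ),
        (dX u (k + 1) 0 i j * dX u k 0 i j / Δx ^ 2
          + dY u (k + 1) i 0 j * dY u k i 0 j / Δy ^ 2
          + dZ u (k + 1) i j 0 * dZ u k i j 0 / Δz ^ 2)) * (Δx * Δy * Δz)

section Telescoping

theorem sum_Icc_int_sub {G : Type*} [AddCommGroup G] (f : ℤ → G) {a b : ℤ} (hab : a ≤ b + 1) :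
    ∑ i ∈ Icc a b, (f (i + 1) - f i) = f (b + 1) - f a := by
  obtain ⟨n, hn⟩ := Int.le.dest hab
  obtain rfl : b = a + n - 1 := by lia
  clear hab hn
  induction n with
  | zero => simp
  | succ n ih =>
    have hIcc : Icc a (a + (n + 1 : ℕ) - 1) = insert (a + n) (Icc a (a + n - 1)) := by
      grind
    have hnotMem : a + (n : ℤ) ∉ Icc a (a + n - 1) := by simp
    rw [hIcc, sum_insert hnotMem, ih]
    grind

theorem sum_Icc_int_green {R : Type*} [CommRing R] (v w : ℤ → R) {a b : ℤ} (hab : a ≤ b + 1) :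
    ∑ i ∈ Icc a b, ((v (i + 1) - v i) * (w (i + 1) - w i)
        + (v (i + 1) - 2 * v i + v (i - 1)) * w i)
      = (v (b + 1) - v b) * w (b + 1) - (v a - v (a - 1)) * w a := by
  have htelescope := sum_Icc_int_sub (fun i => (v i - v (i - 1)) * w i) hab
  simp only [add_sub_cancel_right] at htelescope
  rw [← htelescope]
  exact sum_congr rfl fun i _ => by ring

end Telescoping

section Green

variable (N : ℕ) (Δx Δy Δz : ℝ) (f g : ℕ → ℤ → ℤ → ℤ → ℝ) (k : ℕ)

/-- The discrete Laplacian `(δ²ₓ/(Δx)² + δ²ᵧ/(Δy)² + δ²_z/(Δz)²) f`. -/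
def discreteLaplacian (m n p : ℤ) : ℝ :=
  d2X f k m n p / Δx ^ 2 + d2Y f k m n p / Δy ^ 2 + d2Z f k m n p / Δz ^ 2

/-- The dot product of the forward-difference gradients of `f` and `g`. -/
def gradDot (m n p : ℤ) : ℝ :=
  dX f k m n p * dX g k m n p / Δx ^ 2 + dY f k m n p * dY g k m n p / Δy ^ 2
    + dZ f k m n p * dZ g k m n p / Δz ^ 2

/-- The normal components of the gradient dot product of `f` and `g` on the three faces at index
`0`, collected at the common tangential indices `i`, `j`. -/
def faceGradDot (i j : ℤ) : ℝ :=
  dX f k 0 i j * dX g k 0 i j / Δx ^ 2 + dY f k i 0 j * dY g k i 0 j / Δy ^ 2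
    + dZ f k i j 0 * dZ g k i j 0 / Δz ^ 2

/-- The net outward flux of `g ∇f` through the three pairs of opposite faces of the box, collected
at the common tangential indices `i`, `j`. In each direction the difference of `f` is forward, and
`g` is taken at the outer node: `N + 1` on the far face and `0` on the near one. -/
def boundaryFlux (i j : ℤ) : ℝ :=
  (dX f k N i j * g k (N + 1) i j - dX f k 0 i j * g k 0 i j) / Δx ^ 2
    + (dY f k i N j * g k i (N + 1) j - dY f k i 0 j * g k i 0 j) / Δy ^ 2
    + (dZ f k i j N * g k i j (N + 1) - dZ f k i j 0 * g k i j 0) / Δz ^ 2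

theorem sum_dX_mul_dX_add_d2X_mul (n p : ℤ) :
    ∑ m ∈ Icc (1 : ℤ) N, (dX f k m n p * dX g k m n p + d2X f k m n p * g k m n p)
      = dX f k N n p * g k (N + 1) n p - dX f k 0 n p * g k 0 n p
        - dX f k 0 n p * dX g k 0 n p := by
  have hgreen := sum_Icc_int_green (f k · n p) (g k · n p) (a := 1) (b := N) (by lia)
  simp only [dX, d2X, hgreen, sub_self, zero_add]
  ring

theorem sum_dY_mul_dY_add_d2Y_mul (m p : ℤ) :
    ∑ n ∈ Icc (1 : ℤ) N, (dY f k m n p * dY g k m n p + d2Y f k m n p * g k m n p)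
      = dY f k m N p * g k m (N + 1) p - dY f k m 0 p * g k m 0 p
        - dY f k m 0 p * dY g k m 0 p :=
  sum_dX_mul_dX_add_d2X_mul N (fun k n m p => f k m n p) (fun k n m p => g k m n p) k m p

theorem sum_dZ_mul_dZ_add_d2Z_mul (m n : ℤ) :
    ∑ p ∈ Icc (1 : ℤ) N, (dZ f k m n p * dZ g k m n p + d2Z f k m n p * g k m n p)
      = dZ f k m n N * g k m n (N + 1) - dZ f k m n 0 * g k m n 0
        - dZ f k m n 0 * dZ g k m n 0 :=
  sum_dX_mul_dX_add_d2X_mul N (fun k p m n => f k m n p) (fun k p m n => g k m n p) k m n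

theorem sum_gradDot_add_discreteLaplacian_mul :
    ∑ m ∈ Icc (1 : ℤ) N, ∑ n ∈ Icc (1 : ℤ) N, ∑ p ∈ Icc (1 : ℤ) N,
        (gradDot Δx Δy Δz f g k m n p + discreteLaplacian Δx Δy Δz f k m n p * g k m n p)
      = ∑ i ∈ Icc (1 : ℤ) N, ∑ j ∈ Icc (1 : ℤ) N,
        (boundaryFlux N Δx Δy Δz f g k i j - faceGradDot Δx Δy Δz f g k i j) := by
  have hsplit (m n p : ℤ) :
      gradDot Δx Δy Δz f g k m n p + discreteLaplacian Δx Δy Δz f k m n p * g k m n p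
        = (dX f k m n p * dX g k m n p + d2X f k m n p * g k m n p) / Δx ^ 2
          + (dY f k m n p * dY g k m n p + d2Y f k m n p * g k m n p) / Δy ^ 2
          + (dZ f k m n p * dZ g k m n p + d2Z f k m n p * g k m n p) / Δz ^ 2 := by
    simp only [gradDot, discreteLaplacian]
    ring
  have hface (i j : ℤ) :
      boundaryFlux N Δx Δy Δz f g k i j - faceGradDot Δx Δy Δz f g k i j
        = ∑ m ∈ Icc (1 : ℤ) N,
            (dX f k m i j * dX g k m i j + d2X f k m i j * g k m i j) / Δx ^ 2
          + ∑ n ∈ Icc (1 : ℤ) N,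
            (dY f k i n j * dY g k i n j + d2Y f k i n j * g k i n j) / Δy ^ 2
          + ∑ p ∈ Icc (1 : ℤ) N,
            (dZ f k i j p * dZ g k i j p + d2Z f k i j p * g k i j p) / Δz ^ 2 := by
    rw [← sum_div, ← sum_div, ← sum_div, sum_dX_mul_dX_add_d2X_mul, sum_dY_mul_dY_add_d2Y_mul,
      sum_dZ_mul_dZ_add_d2Z_mul]
    simp only [boundaryFlux, faceGradDot]
    ring
  simp only [hsplit, hface, sum_add_distrib]
  congr 2
  · rw [sum_comm]
    exact sum_congr rfl fun _ _ => sum_comm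
  · exact sum_congr rfl fun _ _ => sum_comm

end Green

section EnergyBalance

variable (N : ℕ) (Δt Δx Δy Δz μ J : ℝ) (V : ℝ → ℝ) (u : ℕ → ℤ → ℤ → ℤ → ℝ) (k : ℕ)

/-- The left-hand side of the conservative scheme in multiplied form: the interior source term
of the energy balance. -/
def schemeResidual (m n p : ℤ) : ℝ :=
  (d2T u k m n p / Δt ^ 2 - discreteLaplacian Δx Δy Δz u k m n p
      + μ / 2 * (u (k + 1) m n p + u (k - 1) m n p)) * dT u k m n p
    + V (u (k + 1) m n p) - V (u (k - 1) m n p) - J * dT u k m n p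

theorem nodeHd_succ_sub_nodeHd (m n p : ℤ) :
    nodeHd Δt Δx Δy Δz μ J V u (k + 1) m n p - nodeHd Δt Δx Δy Δz μ J V u k m n p
      = 1 / 2 * (schemeResidual Δt Δx Δy Δz μ J V u (k + 1) m n p
        + (gradDot Δx Δy Δz u (dT u) (k + 1) m n p
          + discreteLaplacian Δx Δy Δz u (k + 1) m n p * dT u (k + 1) m n p)) := by
  simp only [nodeHd, schemeResidual, gradDot, dX, dY, dZ, dT, d2T, Nat.add_sub_cancel]
  ring

theorem totEd_succ_sub_totEd :
    totEd N Δt Δx Δy Δz μ J V u (k + 1) - totEd N Δt Δx Δy Δz μ J V u k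
      = 1 / 2 * (∑ m ∈ Icc (1 : ℤ) N, ∑ n ∈ Icc (1 : ℤ) N, ∑ p ∈ Icc (1 : ℤ) N,
            schemeResidual Δt Δx Δy Δz μ J V u (k + 1) m n p
          + ∑ i ∈ Icc (1 : ℤ) N, ∑ j ∈ Icc (1 : ℤ) N,
            boundaryFlux N Δx Δy Δz u (dT u) (k + 1) i j) * (Δx * Δy * Δz) := by
  have hface (i j : ℤ) :
      (dX u (k + 1 + 1) 0 i j * dX u (k + 1) 0 i j / Δx ^ 2
          + dY u (k + 1 + 1) i 0 j * dY u (k + 1) i 0 j / Δy ^ 2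
          + dZ u (k + 1 + 1) i j 0 * dZ u (k + 1) i j 0 / Δz ^ 2)
        = (dX u (k + 1) 0 i j * dX u k 0 i j / Δx ^ 2
          + dY u (k + 1) i 0 j * dY u k i 0 j / Δy ^ 2
          + dZ u (k + 1) i j 0 * dZ u k i j 0 / Δz ^ 2)
          + faceGradDot Δx Δy Δz u (dT u) (k + 1) i j := by
    simp only [faceGradDot, dX, dY, dZ, dT, Nat.add_sub_cancel]
    ring
  have hgreen := sum_gradDot_add_discreteLaplacian_mul N Δx Δy Δz u (dT u) (k + 1)
  have hnode := fun m n p =>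
    sub_eq_iff_eq_add'.mp (nodeHd_succ_sub_nodeHd Δt Δx Δy Δz μ J V u k m n p)
  simp only [totEd, hnode, hface, sum_add_distrib, ← mul_sum, sum_sub_distrib] at hgreen ⊢
  linear_combination (Δx * Δy * Δz) / 2 * hgreen

end EnergyBalance

/-- The conservative scheme (`β = γ = 0`) with discrete Neumann far boundaries and
time-independent Dirichlet boundary data conserves the discrete total energy. -/
theorem discrete_energy_conservation
    (N M : ℕ) (hN : 1 ≤ N) (hM : 2 ≤ M)
    (Δt Δx Δy Δz : ℝ) (hΔt : 0 < Δt) (hΔx : 0 < Δx) (hΔy : 0 < Δy) (hΔz : 0 < Δz)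
    (μ J : ℝ) (V : ℝ → ℝ)
    (u : ℕ → ℤ → ℤ → ℤ → ℝ)
    (hscheme : ∀ k : ℕ, 1 ≤ k → k ≤ M - 1 → ∀ m n p : ℤ,
      m ∈ Icc (1:ℤ) (N:ℤ) → n ∈ Icc (1:ℤ) (N:ℤ) → p ∈ Icc (1:ℤ) (N:ℤ) →
      (d2T u k m n p / Δt ^ 2
          - (d2X u k m n p / Δx ^ 2 + d2Y u k m n p / Δy ^ 2
              + d2Z u k m n p / Δz ^ 2)
          + μ / 2 * (u (k + 1) m n p + u (k - 1) m n p)) * dT u k m n p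
        + V (u (k + 1) m n p) - V (u (k - 1) m n p) - J * dT u k m n p = 0)
    (hneum : ∀ k ≤ M, ∀ m n p : ℤ,
      m ∈ Icc (1:ℤ) (N:ℤ) → n ∈ Icc (1:ℤ) (N:ℤ) → p ∈ Icc (1:ℤ) (N:ℤ) →
      u k ((N:ℤ) + 1) n p = u k (N:ℤ) n p
        ∧ u k m ((N:ℤ) + 1) p = u k m (N:ℤ) p
        ∧ u k m n ((N:ℤ) + 1) = u k m n (N:ℤ))
    (hdir : ∀ k : ℕ, 1 ≤ k → k ≤ M - 1 → ∀ i j : ℤ,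
      i ∈ Icc (1:ℤ) (N:ℤ) → j ∈ Icc (1:ℤ) (N:ℤ) →
      u (k + 1) 0 i j = u (k - 1) 0 i j
        ∧ u (k + 1) i 0 j = u (k - 1) i 0 j
        ∧ u (k + 1) i j 0 = u (k - 1) i j 0) :
    ∀ k : ℕ, 1 ≤ k → k ≤ M - 1 →
      totEd N Δt Δx Δy Δz μ J V u k = totEd N Δt Δx Δy Δz μ J V u (k - 1) := by
  rintro (_ | k) hk hkM
  · contradiction
  have hresidual : ∀ m ∈ Icc (1 : ℤ) N, ∀ n ∈ Icc (1 : ℤ) N, ∀ p ∈ Icc (1 : ℤ) N,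
      schemeResidual Δt Δx Δy Δz μ J V u (k + 1) m n p = 0 :=
    fun m hm n hn p hp => hscheme (k + 1) hk hkM m n p hm hn hp
  have hflux : ∀ i ∈ Icc (1 : ℤ) N, ∀ j ∈ Icc (1 : ℤ) N,
      boundaryFlux N Δx Δy Δz u (dT u) (k + 1) i j = 0 := by
    intro i hi j hj
    obtain ⟨hX, hY, -⟩ := hneum (k + 1) (by lia) i i j hi hi hj
    obtain ⟨-, -, hZ⟩ := hneum (k + 1) (by lia) i j i hi hj hi
    obtain ⟨hX₀, hY₀, hZ₀⟩ := hdir (k + 1) hk hkM i j hi hj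
    simp [boundaryFlux, dX, dY, dZ, dT, hX, hY, hZ, hX₀, hY₀, hZ₀]
  rw [Nat.add_sub_cancel, ← sub_eq_zero, totEd_succ_sub_totEd,
    sum_eq_zero fun m hm => sum_eq_zero fun n hn => sum_eq_zero (hresidual m hm n hn),
    sum_eq_zero fun i hi => sum_eq_zero (hflux i hi)]
  ring

end
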